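/- arXiv:2209.02114 — 5 statements merged into one kernel-verified Lean document; each statement's English description precedes it below -/
import Mathlib

section
/- Let A be a countable set and a ∈ A. Let Z be a random variable on a probability space (Ω,P) taking values in A∖{a} with finite Shannon entropy H(Z) < ∞. Then for every ε > 0 there exists δ > 0 (depending only on ε and the law of Z) such that for every measurable set E ⊆ Ω with P(E) < δ, the random variable Y defined by Y(ω) = Z(ω) if ω ∈ E and Y(ω) = a if ω ∉ E satisfies H(Y) < ε. -/
open MeasureTheory
open scoped Classical ENNReal

/-- Shannon entropy of a random variable `Y` taking values in a countable set,
as a value in `ℝ≥0∞`: `H(Y) = ∑_x (−P(Y = x) log P(Y = x))`. -/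
noncomputable def shannonEntropy {Ω A : Type*} [MeasurableSpace Ω]
    (P : Measure Ω) (Y : Ω → A) : ℝ≥0∞ :=
  ∑' x : A, ENNReal.ofReal (Real.negMulLog ((P (Y ⁻¹' {x})).toReal))

theorem negMulLog_le_aux {q p : ℝ} (hq : 0 ≤ q) (hqp : q ≤ p) (hp : p ≤ 1) :
    Real.negMulLog q ≤ Real.negMulLog p + p := by
  rcases hq.eq_or_lt with h | h
  · subst h
    have := Real.negMulLog_nonneg hqp hp
    simp only [Real.negMulLog_zero]
    linarith
  · have hp0 : 0 < p := h.trans_le hqp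
    have h1 : Real.log (p / q) ≤ p / q - 1 := Real.log_le_sub_one_of_pos (by positivity)
    rw [Real.log_div hp0.ne' h.ne'] at h1
    have h2 : q * (Real.log p - Real.log q) ≤ q * (p / q - 1) :=
      mul_le_mul_of_nonneg_left h1 hq
    have h3 : q * (p / q - 1) = p - q := by field_simp
    have h4 : Real.log p ≤ 0 := Real.log_nonpos hp0.le hp
    unfold Real.negMulLog
    nlinarith [mul_nonneg (sub_nonneg.2 hqp) (neg_nonneg.2 h4)]

/-- if `Z` is a random variable with values in `A \ {a}` and finite
entropy, then for every `ε > 0` there is `δ > 0` such that for every measurable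
`E ⊆ Ω` with `P(E) < δ`, the variable equal to `Z` on `E` and to `a` off `E`
has entropy `< ε`. -/
theorem statement0 {Ω A : Type*} [MeasurableSpace Ω] [MeasurableSpace A]
    [MeasurableSingletonClass A] [Countable A]
    (P : Measure Ω) [IsProbabilityMeasure P]
    (a : A) (Z : Ω → A) (hZmeas : Measurable Z) (hZne : ∀ ω, Z ω ≠ a)
    (hent : shannonEntropy P Z < ⊤) :
    ∀ ε : ℝ, 0 < ε → ∃ δ : ℝ, 0 < δ ∧
      ∀ E : Set Ω, MeasurableSet E → P E < ENNReal.ofReal δ →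
        shannonEntropy P (fun ω => if ω ∈ E then Z ω else a) < ENNReal.ofReal ε := by
  intro ε hε
  let p : A → ℝ := fun x => (P (Z ⁻¹' {x})).toReal
  let Y : Set Ω → Ω → A := fun E ω => if ω ∈ E then Z ω else a
  let q : Set Ω → A → ℝ := fun E x => (P (Y E ⁻¹' {x})).toReal
  have hle1 : ∀ s : Set Ω, (P s).toReal ≤ 1 := fun s =>
    ENNReal.toReal_le_of_le_ofReal zero_le_one (by simpa using prob_le_one)
  have hp0 : ∀ x, 0 ≤ p x := fun x => ENNReal.toReal_nonneg
  have hq0 : ∀ E x, 0 ≤ q E x := fun E x => ENNReal.toReal_nonneg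
  have hYa : ∀ E, Y E ⁻¹' {a} = Eᶜ := by
    intro E
    ext ω
    by_cases h : ω ∈ E <;> simp [Y, h, hZne]
  have hYx : ∀ E x, x ≠ a → Y E ⁻¹' {x} = Z ⁻¹' {x} ∩ E := by
    intro E x hx
    ext ω
    by_cases h : ω ∈ E <;> simp [Y, h, hx.symm]
  have hqp : ∀ E x, x ≠ a → q E x ≤ p x := by
    intro E x hx
    simp only [q, p, hYx E x hx]
    exact ENNReal.toReal_mono (measure_ne_top _ _) (measure_mono Set.inter_subset_left)
  have hqE : ∀ E x, x ≠ a → q E x ≤ (P E).toReal := by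
    intro E x hx
    simp only [q, hYx E x hx]
    exact ENNReal.toReal_mono (measure_ne_top _ _) (measure_mono Set.inter_subset_right)
  have hps : Summable p := by
    apply ENNReal.summable_toReal
    have := tsum_measure_preimage_singleton (μ := P) (f := Z) (s := Set.univ)
      (Set.to_countable _) (fun y _ => hZmeas (measurableSet_singleton y))
    rw [tsum_univ (fun y => P (Z ⁻¹' {y}))] at this
    rw [this]
    exact measure_ne_top _ _
  have hfs : Summable (fun x => Real.negMulLog (p x)) := by
    have := ENNReal.summable_toReal hent.ne
    refine this.congr fun x => ?_
    exact ENNReal.toReal_ofReal (Real.negMulLog_nonneg (hp0 x) (hle1 _))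
  let b : A → ℝ := fun x => Real.negMulLog (p x) + p x + (if x = a then 1 else 0)
  have hbs : Summable b := by
    refine (hfs.add hps).add ?_
    exact summable_of_ne_finset_zero (s := {a}) (by intro x hx; simpa using hx)
  have hnn : ∀ E x, 0 ≤ Real.negMulLog (q E x) := fun E x =>
    Real.negMulLog_nonneg (hq0 E x) (hle1 _)
  have hbd : ∀ E x, Real.negMulLog (q E x) ≤ b x := by
    intro E x
    by_cases hx : x = a
    · have h1 := negMulLog_le_aux (hq0 E x) (hle1 _) le_rfl
      have h2 := Real.negMulLog_nonneg (hp0 x) (hle1 _)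
      have h3 := hp0 x
      simp only [b, hx, if_true, Real.negMulLog_one] at *
      linarith
    · have h1 := negMulLog_le_aux (hq0 E x) (hqp E x hx) (hle1 _)
      simpa [b, hx] using h1
  let l : Filter {E : Set Ω // MeasurableSet E} :=
    Filter.comap (fun E => (P E.1).toReal) (nhds 0)
  have hl : Filter.Tendsto (fun E : {E : Set Ω // MeasurableSet E} => (P E.1).toReal) l (nhds 0) :=
    Filter.tendsto_comap
  have hlim : Filter.Tendsto
      (fun E : {E : Set Ω // MeasurableSet E} => ∑' x, Real.negMulLog (q E.1 x)) l
      (nhds (∑' _ : A, (0 : ℝ))) := by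
    refine tendsto_tsum_of_dominated_convergence hbs ?_ ?_
    · intro x
      by_cases hx : x = a
      · have h1 : Filter.Tendsto (fun E : {E : Set Ω // MeasurableSet E} => q E.1 x) l (nhds 1) := by
          have h2 : ∀ E : {E : Set Ω // MeasurableSet E}, q E.1 x = 1 - (P E.1).toReal := by
            intro E
            simp only [q, hx, hYa]
            rw [prob_compl_eq_one_sub E.2, ENNReal.toReal_sub_of_le prob_le_one (by simp)]
            simp
          simp only [h2]
          simpa using hl.const_sub 1
        simpa [Function.comp_def] using (Real.continuous_negMulLog.tendsto 1).comp h1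
      · have h1 : Filter.Tendsto (fun E : {E : Set Ω // MeasurableSet E} => q E.1 x) l (nhds 0) :=
          squeeze_zero (fun E => hq0 _ _) (fun E => hqE _ _ hx) hl
        simpa [Function.comp_def] using (Real.continuous_negMulLog.tendsto 0).comp h1
    · refine Filter.Eventually.of_forall fun E x => ?_
      rw [Real.norm_of_nonneg (hnn _ _)]
      exact hbd _ _
  rw [tsum_zero] at hlim
  have hev := hlim.eventually (gt_mem_nhds hε)
  obtain ⟨δ, hδ, hsub⟩ := (Metric.nhds_basis_ball.comap _).mem_iff.1 hev
  refine ⟨δ, hδ, fun E hE hPE => ?_⟩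
  have hmem : ∑' x, Real.negMulLog (q E x) < ε := by
    have : (⟨E, hE⟩ : {E : Set Ω // MeasurableSet E}) ∈
        (fun E : {E : Set Ω // MeasurableSet E} => (P E.1).toReal) ⁻¹' Metric.ball 0 δ := by
      simp only [Set.mem_preimage, Metric.mem_ball, dist_zero_right,
        Real.norm_of_nonneg ENNReal.toReal_nonneg]
      exact (ENNReal.lt_ofReal_iff_toReal_lt (measure_ne_top _ _)).1 hPE
    exact hsub this
  have hs : Summable (fun x => Real.negMulLog (q E x)) :=
    Summable.of_nonneg_of_le (hnn E) (hbd E) hbs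
  change ∑' x, ENNReal.ofReal (Real.negMulLog (q E x)) < _
  rw [← ENNReal.ofReal_tsum_of_nonneg (hnn E) hs]
  exact (ENNReal.ofReal_lt_ofReal_iff hε).2 hmem
end

section
/- Let A be a countable set, a ∈ A, and p a probability distribution on A∖{a} with finite Shannon entropy. For every ε > 0 there exists δ > 0 (depending only on ε and p) such that: for every probability space (Ω,P), every integer m ≥ 1, every family of random variables Z_1,…,Z_m each with law p (not necessarily independent), and every measurable set E ⊆ Ω with P(E) < δ, the A^m-valued random variable Y defined by Y(ω) = (Z_1(ω),…,Z_m(ω)) if ω ∈ E and Y(ω) = (a,…,a) if ω ∉ E satisfies H(Y) ≤ m·ε. -/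
open MeasureTheory
open scoped Classical ENNReal

/-- Shannon entropy of a probability distribution `p` on a countable set. -/
noncomputable def distEntropy {A : Type*} [MeasurableSpace A]
    (p : Measure A) : ℝ≥0∞ :=
  ∑' x : A, ENNReal.ofReal (Real.negMulLog ((p {x}).toReal))

lemma aux_real (t c r : ℝ) (ht : 0 < t) (hc : 0 < c) (hr : 0 < r) :
    Real.negMulLog t ≤ t * (-Real.log r) + t * (-Real.log c) + c * r := by
  have h := Real.log_le_sub_one_of_pos (x := c * r / t) (by positivity)
  rw [Real.log_div (by positivity) (by positivity), Real.log_mul hc.ne' hr.ne'] at h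
  have h2 := mul_le_mul_of_nonneg_left h ht.le
  have h3 : t * (c * r / t - 1) = c * r - t := by field_simp
  rw [h3] at h2
  unfold Real.negMulLog
  nlinarith

noncomputable def ellAux {A : Type*} [MeasurableSpace A] (p : Measure A) (b : A) : ℝ≥0∞ :=
  ENNReal.ofReal (-Real.log (p {b}).toReal)

lemma aux_ell {A : Type*} [MeasurableSpace A]
    [MeasurableSingletonClass A] [Countable A] (p : Measure A) [IsProbabilityMeasure p] :
    ∫⁻ b, ellAux p b ∂p = distEntropy p := by
  rw [lintegral_countable']
  unfold distEntropy ellAux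
  congr 1
  ext b
  conv_lhs => rw [mul_comm, ← ENNReal.ofReal_toReal (measure_ne_top p {b})]
  rw [← ENNReal.ofReal_mul ENNReal.toReal_nonneg,
    ENNReal.toReal_ofReal ENNReal.toReal_nonneg, Real.negMulLog]
  congr 1
  ring

lemma aux_tail {A : Type*} [MeasurableSpace A]
    [MeasurableSingletonClass A] [Countable A] (p : Measure A) [IsProbabilityMeasure p]
    (hent : distEntropy p < ⊤) (η : ℝ≥0∞) (hη : 0 < η) :
    ∃ n : ℕ, ∫⁻ b, (ellAux p b - n) ∂p < η := by
  have h : Filter.Tendsto (fun n : ℕ => ∫⁻ b, (ellAux p b - n) ∂p) Filter.atTop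
      (nhds (∫⁻ _, 0 ∂p)) := by
    refine tendsto_lintegral_of_dominated_convergence (ellAux p)
      (fun n => measurable_of_countable _) (fun n => Filter.Eventually.of_forall
        fun b => tsub_le_self) (by rw [aux_ell]; exact hent.ne) ?_
    refine Filter.Eventually.of_forall fun b => ?_
    obtain ⟨N, hN⟩ := ENNReal.exists_nat_gt (ENNReal.ofReal_ne_top : ellAux p b ≠ ⊤)
    refine tendsto_const_nhds.congr' ?_
    filter_upwards [Filter.eventually_ge_atTop N] with n hn
    symm
    exact tsub_eq_zero_of_le (hN.le.trans (by exact_mod_cast hn))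
  rw [lintegral_zero] at h
  exact (h.eventually (gt_mem_nhds hη)).exists

lemma aux_int {A : Type*} [MeasurableSpace A]
    [MeasurableSingletonClass A] [Countable A] (p ν : Measure A)
    (hν : ν ≤ p) (n : ℕ) :
    ∫⁻ b, ellAux p b ∂ν ≤ ∫⁻ b, (ellAux p b - n) ∂p + n * ν Set.univ := by
  calc ∫⁻ b, ellAux p b ∂ν ≤ ∫⁻ b, ((ellAux p b - n) + n) ∂ν :=
        lintegral_mono fun b => le_tsub_add
    _ = ∫⁻ b, (ellAux p b - n) ∂ν + n * ν Set.univ := by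
        rw [lintegral_add_right _ measurable_const, lintegral_const]
    _ ≤ _ := by gcongr

lemma aux_pt {A : Type*} [MeasurableSpace A]
    [MeasurableSingletonClass A] [Countable A] (p : Measure A) [IsProbabilityMeasure p]
    (m : ℕ) (x : Fin m → A) (t c : ℝ≥0∞) (htc : t ≤ c) (hc1 : c ≤ 1)
    (htp : ∀ i, t ≤ p {x i}) :
    ENNReal.ofReal (Real.negMulLog t.toReal) ≤
      (∑ i, ellAux p (x i)) * t + ENNReal.ofReal (-Real.log c.toReal) * t
        + c * ∏ i, p {x i} := by
  by_cases ht0 : t = 0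
  · simp [ht0]
  have hctop : c ≠ ⊤ := (hc1.trans_lt ENNReal.one_lt_top).ne
  have httop : t ≠ ⊤ := (htc.trans_lt hctop.lt_top).ne
  have ht : 0 < t.toReal := ENNReal.toReal_pos ht0 httop
  have hc : 0 < c.toReal := ht.trans_le (ENNReal.toReal_mono hctop htc)
  have hp : ∀ i, 0 < (p {x i}).toReal := fun i =>
    ht.trans_le (ENNReal.toReal_mono (measure_ne_top _ _) (htp i))
  have hp1 : ∀ i, (p {x i}).toReal ≤ 1 := fun i => measureReal_le_one
  have hl : ∀ i, 0 ≤ -Real.log (p {x i}).toReal := fun i => by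
    have := Real.log_nonpos (hp i).le (hp1 i)
    linarith
  have hlc : 0 ≤ -Real.log c.toReal := by
    have := Real.log_nonpos hc.le (ENNReal.toReal_mono ENNReal.one_ne_top hc1)
    linarith
  have hr : 0 < ∏ i, (p {x i}).toReal := Finset.prod_pos fun i _ => hp i
  have key := aux_real t.toReal c.toReal (∏ i, (p {x i}).toReal) ht hc hr
  rw [Real.log_prod (fun i _ => (hp i).ne')] at key
  have e : (∑ i, ellAux p (x i)) * t + ENNReal.ofReal (-Real.log c.toReal) * t
        + c * ∏ i, p {x i} = ENNReal.ofReal (t.toReal * (-∑ i, Real.log (p {x i}).toReal)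
          + t.toReal * (-Real.log c.toReal) + c.toReal * ∏ i, (p {x i}).toReal) := by
    have hs : 0 ≤ -∑ i, Real.log (p {x i}).toReal := by
      rw [← Finset.sum_neg_distrib]; exact Finset.sum_nonneg fun i _ => hl i
    rw [ENNReal.ofReal_add (by positivity) (by positivity),
      ENNReal.ofReal_add (by positivity) (by positivity),
      ENNReal.ofReal_mul ht.le, ENNReal.ofReal_mul ht.le, ENNReal.ofReal_mul hc.le,
      ENNReal.ofReal_toReal httop, ENNReal.ofReal_toReal hctop,
      ENNReal.ofReal_prod_of_nonneg (fun i _ => (hp i).le),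
      ← Finset.sum_neg_distrib, ENNReal.ofReal_sum_of_nonneg (fun i _ => hl i)]
    simp only [ENNReal.ofReal_toReal (measure_ne_top p _), ellAux]
    ring
  rw [e]
  exact ENNReal.ofReal_le_ofReal key

lemma aux_sum {A : Type*} [MeasurableSpace A]
    [MeasurableSingletonClass A] [Countable A] (p : Measure A) [IsProbabilityMeasure p]
    (m : ℕ) (ν : Measure (Fin m → A)) (hν1 : ν Set.univ ≤ 1)
    (hν : ∀ i, ν.map (fun x => x i) ≤ p) (n : ℕ) :
    ∑' x, ENNReal.ofReal (Real.negMulLog (ν {x}).toReal) ≤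
      m * (∫⁻ b, (ellAux p b - n) ∂p + n * ν Set.univ)
        + ENNReal.ofReal (Real.negMulLog (ν Set.univ).toReal) + ν Set.univ := by
  have hctop : ν Set.univ ≠ ⊤ := (hν1.trans_lt ENNReal.one_lt_top).ne
  have tsum_one : ∀ μ : Measure (Fin m → A), ∑' x, μ {x} = μ Set.univ := fun μ => by
    have := lintegral_countable' (μ := μ) (fun _ => 1)
    simpa using this.symm
  calc ∑' x, ENNReal.ofReal (Real.negMulLog (ν {x}).toReal)
      ≤ ∑' x, ((∑ i, ellAux p (x i)) * ν {x}
          + ENNReal.ofReal (-Real.log (ν Set.univ).toReal) * ν {x}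
          + ν Set.univ * ∏ i, p {x i}) := by
        refine ENNReal.tsum_le_tsum fun x => aux_pt p m x _ _ (measure_mono (Set.subset_univ _))
          hν1 fun i => ?_
        refine le_trans ?_ (hν i {x i})
        rw [Measure.map_apply (measurable_pi_apply i) (measurableSet_singleton _)]
        exact measure_mono (by intro y hy; simp at hy; simp [hy])
    _ = ∫⁻ x, ∑ i, ellAux p (x i) ∂ν
          + ENNReal.ofReal (-Real.log (ν Set.univ).toReal) * ν Set.univ
          + ν Set.univ * 1 := by
        rw [ENNReal.tsum_add, ENNReal.tsum_add, ENNReal.tsum_mul_left, ENNReal.tsum_mul_left,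
          tsum_one, ← lintegral_countable']
        congr 2
        have := tsum_one (Measure.pi fun _ => p)
        simpa [Measure.pi_singleton] using this
    _ ≤ _ := by
        rw [mul_one]
        gcongr ?_ + ?_ + _
        · rw [lintegral_finsetSum _ (fun i _ => measurable_of_countable _)]
          calc ∑ i : Fin m, ∫⁻ x, ellAux p (x i) ∂ν
              ≤ ∑ i : Fin m, (∫⁻ b, (ellAux p b - n) ∂p + n * ν Set.univ) := by
                refine Finset.sum_le_sum fun i _ => ?_
                have := aux_int p _ (hν i) n
                rw [lintegral_map (measurable_of_countable _) (measurable_pi_apply i),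
                  Measure.map_apply (measurable_pi_apply i) MeasurableSet.univ] at this
                simpa using this
            _ = _ := by simp [mul_add]
        · conv_lhs => rw [mul_comm, ← ENNReal.ofReal_toReal hctop]
          rw [← ENNReal.ofReal_mul ENNReal.toReal_nonneg,
            ENNReal.toReal_ofReal ENNReal.toReal_nonneg, Real.negMulLog]
          apply le_of_eq
          congr 1
          ring

/-- for a probability distribution `p` on `A \ {a}` with finite
entropy and every `ε > 0`, there is `δ > 0` depending only on `ε` and `p`
such that: for every probability space `(Ω, P)`, every `m ≥ 1`, every family
of random variables `Z₁, …, Z_m` each with law `p` (not necessarily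
independent), and every measurable `E ⊆ Ω` with `P(E) < δ`, the `A^m`-valued
variable equal to `(Z₁, …, Z_m)` on `E` and to `(a, …, a)` off `E` has entropy
at most `m·ε`. -/
theorem statement1 {A : Type*} [MeasurableSpace A]
    [MeasurableSingletonClass A] [Countable A]
    (a : A) (p : Measure A) [IsProbabilityMeasure p]
    (hpa : p {a} = 0) (hent : distEntropy p < ⊤) :
    ∀ ε : ℝ, 0 < ε → ∃ δ : ℝ, 0 < δ ∧
      ∀ (Ω : Type*) (_ : MeasurableSpace Ω) (P : Measure Ω),
        IsProbabilityMeasure P →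
        ∀ (m : ℕ), 1 ≤ m →
        ∀ (Z : Fin m → Ω → A), (∀ i, Measurable (Z i)) →
          (∀ i, P.map (Z i) = p) →
          ∀ E : Set Ω, MeasurableSet E → P E < ENNReal.ofReal δ →
            shannonEntropy P
              (fun ω => if ω ∈ E then (fun i => Z i ω) else (fun _ => a)) ≤
              (m : ℝ≥0∞) * ENNReal.ofReal ε := by
  intro ε hε
  obtain ⟨n, hn⟩ := aux_tail p hent (ENNReal.ofReal (ε / 2)) (by simpa using hε)
  have hcont : Continuous fun q : ℝ =>
      Real.negMulLog (1 - q) + Real.negMulLog q + q + n * q := by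
    have := Real.continuous_negMulLog
    fun_prop
  have h0 := hcont.tendsto 0
  simp only [sub_zero, Real.negMulLog_one, Real.negMulLog_zero, mul_zero, add_zero] at h0
  obtain ⟨δ, hδ, hball⟩ := Metric.eventually_nhds_iff.1
    (h0.eventually (gt_mem_nhds (half_pos hε)))
  refine ⟨δ, hδ, ?_⟩
  intro Ω _ P hP m hm Z hZ hlaw E hE hPE
  have hZm : Measurable (fun ω => (fun i => Z i ω)) := measurable_pi_lambda _ hZ
  set q : ℝ := (P E).toReal with hq
  have hPq : P E = ENNReal.ofReal q := (ENNReal.ofReal_toReal (measure_ne_top _ _)).symm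
  have hq0 : 0 ≤ q := ENNReal.toReal_nonneg
  have hq1 : q ≤ 1 := measureReal_le_one
  have hqδ : q < δ := by
    rw [hPq] at hPE
    exact (ENNReal.ofReal_lt_ofReal_iff hδ).1 hPE
  have hG := hball (y := q) (by simpa [abs_of_nonneg hq0] using hqδ)
  set ν : Measure (Fin m → A) := (P.restrict E).map (fun ω => (fun i => Z i ω)) with hνdef
  have hνu : ν Set.univ = P E := by
    rw [hνdef, Measure.map_apply hZm MeasurableSet.univ]; simp
  have hνi : ∀ i, ν.map (fun x => x i) ≤ p := fun i => by
    rw [hνdef, Measure.map_map (measurable_pi_apply i) hZm, ← hlaw i]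
    exact Measure.map_mono Measure.restrict_le_self (hZ i)
  have hS := aux_sum p m ν (by rw [hνu]; exact prob_le_one) hνi n
  rw [hνu] at hS
  have hνx : ∀ x, ν {x} = P (E ∩ (fun ω => (fun i => Z i ω)) ⁻¹' {x}) := fun x => by
    rw [hνdef, Measure.map_apply hZm (measurableSet_singleton _),
      Measure.restrict_apply (hZm (measurableSet_singleton _)), Set.inter_comm]
  have hH : shannonEntropy P
      (fun ω => if ω ∈ E then (fun i => Z i ω) else (fun _ => a)) ≤
      ENNReal.ofReal (Real.negMulLog (1 - q)) +
        ∑' x, ENNReal.ofReal (Real.negMulLog (ν {x}).toReal) := by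
    unfold shannonEntropy
    rw [← tsum_ite_eq (fun _ : Fin m => a) (fun _ => ENNReal.ofReal (Real.negMulLog (1 - q))),
      ← ENNReal.tsum_add]
    refine ENNReal.tsum_le_tsum fun x => ?_
    by_cases hx : x = fun _ => a
    · rw [if_pos hx]
      refine le_trans (le_of_eq ?_) le_self_add
      have hnull : P (E ∩ (fun ω => (fun i => Z i ω)) ⁻¹' {x}) = 0 := by
        have h1 : P (Z ⟨0, hm⟩ ⁻¹' {a}) = 0 := by
          rw [← Measure.map_apply (hZ _) (measurableSet_singleton _), hlaw, hpa]
        refine measure_mono_null ?_ h1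
        rintro ω ⟨_, hω⟩
        have hω' : (fun i => Z i ω) = x := hω
        have := congrFun (hω'.trans hx) ⟨0, hm⟩
        exact this
      have hset : (fun ω => if ω ∈ E then (fun i => Z i ω) else (fun _ => a)) ⁻¹' {x}
          = Eᶜ ∪ (E ∩ (fun ω => (fun i => Z i ω)) ⁻¹' {x}) := by
        ext ω
        by_cases hω : ω ∈ E <;> simp [hω, hx]
      rw [hset, measure_congr (union_ae_eq_left_of_ae_eq_empty (ae_eq_empty.2 hnull)), prob_compl_eq_one_sub hE,
        ENNReal.toReal_sub_of_le prob_le_one ENNReal.one_ne_top]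
      simp [hq]
    · rw [if_neg hx, zero_add, hνx]
      apply le_of_eq
      congr 4
      ext ω
      by_cases hω : ω ∈ E
      · simp [hω]
      · simp [hω, Ne.symm hx]
  refine hH.trans ((add_le_add_right hS _).trans ?_)
  have hm1 : (1 : ℝ≥0∞) ≤ m := by exact_mod_cast hm
  have hA1 : 0 ≤ Real.negMulLog (1 - q) := Real.negMulLog_nonneg (by linarith) (by linarith)
  have hA2 : 0 ≤ Real.negMulLog q := Real.negMulLog_nonneg hq0 hq1
  have hB : ENNReal.ofReal (Real.negMulLog (1 - q)) + ENNReal.ofReal (Real.negMulLog q)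
      + P E + n * P E ≤ ENNReal.ofReal (ε / 2) := by
    rw [hPq, ← ENNReal.ofReal_natCast n, ← ENNReal.ofReal_mul (by positivity),
      ← ENNReal.ofReal_add hA1 hA2, ← ENNReal.ofReal_add (by positivity) hq0,
      ← ENNReal.ofReal_add (by positivity) (by positivity)]
    exact ENNReal.ofReal_le_ofReal hG.le
  calc _ = (ENNReal.ofReal (Real.negMulLog (1 - q)) + ENNReal.ofReal (Real.negMulLog q)
          + P E) + m * (∫⁻ b, (ellAux p b - n) ∂p + n * P E) := by ring
    _ ≤ m * (ENNReal.ofReal (Real.negMulLog (1 - q)) + ENNReal.ofReal (Real.negMulLog q)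
          + P E) + m * (∫⁻ b, (ellAux p b - n) ∂p + n * P E) := by
        gcongr
        exact le_mul_of_one_le_left' hm1
    _ = m * ((ENNReal.ofReal (Real.negMulLog (1 - q)) + ENNReal.ofReal (Real.negMulLog q)
          + P E + n * P E) + ∫⁻ b, (ellAux p b - n) ∂p) := by ring
    _ ≤ m * (ENNReal.ofReal (ε / 2) + ENNReal.ofReal (ε / 2)) := by
        gcongr
    _ = _ := by
        rw [← ENNReal.ofReal_add (by positivity) (by positivity), add_halves]
end

section
/- Let X be a δ-hyperbolic metric space and let x_0, x_1, x_2, x_3 be a (C,D)-chain in X with D ≥ 2C + 4δ + 1. Then d(x_0,x_3) ≥ 3D − 4C − 8δ; in particular d(x_0,x_3) ≥ D. -/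
/-- Gromov product `(x,y)_z = (d(x,z) + d(y,z) − d(x,y))/2`. -/
noncomputable def gromov {X : Type*} [MetricSpace X] (x y z : X) : ℝ :=
  (dist x z + dist y z - dist x y) / 2

/-- A metric space is `δ`-hyperbolic if
`(x,y)_o ≥ min((x,z)_o, (y,z)_o) − δ` for all `x, y, z, o`. -/
def IsDeltaHyperbolic (X : Type*) [MetricSpace X] (δ : ℝ) : Prop :=
  ∀ x y z o : X, min (gromov x z o) (gromov y z o) - δ ≤ gromov x y o

/-- if `x₀, x₁, x₂, x₃` is a `(C,D)`-chain with `D ≥ 2C + 4δ + 1`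
in a `δ`-hyperbolic space, then `d(x₀,x₃) ≥ 3D − 4C − 8δ`; in particular
`d(x₀,x₃) ≥ D`. -/
theorem statement3 {X : Type*} [MetricSpace X] (δ C D : ℝ)
    (hδ : 0 ≤ δ) (hC : 0 ≤ C) (hX : IsDeltaHyperbolic X δ)
    (x₀ x₁ x₂ x₃ : X)
    (h₁ : gromov x₀ x₂ x₁ ≤ C) (h₂ : gromov x₁ x₃ x₂ ≤ C)
    (hd₀ : D ≤ dist x₀ x₁) (hd₁ : D ≤ dist x₁ x₂) (hd₂ : D ≤ dist x₂ x₃)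
    (hD : 2 * C + 4 * δ + 1 ≤ D) :
    3 * D - 4 * C - 8 * δ ≤ dist x₀ x₃ ∧ D ≤ dist x₀ x₃ := by
  have h := hX x₀ x₂ x₁ x₃
  unfold gromov at h h₁ h₂
  rw [dist_comm x₂ x₁] at *
  rw [dist_comm x₃ x₂] at h₂
  have key : 3 * D - 4 * C - 8 * δ ≤ dist x₀ x₃ := by
    rcases min_cases ((dist x₀ x₃ + dist x₁ x₃ - dist x₀ x₁) / 2)
      ((dist x₂ x₃ + dist x₁ x₃ - dist x₁ x₂) / 2) with ⟨e, _⟩ | ⟨e, _⟩ <;>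
      rw [e] at h <;> linarith
  exact ⟨key, by linarith⟩
end

section
/- Let X be a geodesic metric space in which all geodesic triangles are δ-thin. Let x, y, a ∈ X, let C, K ≥ 0, let γ be a geodesic from x to y, and suppose d(a, γ(t)) ≤ C for some t ∈ [0, d(x,y)]. If g : X → X is a surjective isometry with d(x, g x) ≤ K and d(y, g y) ≤ K, then d(a, g a) ≤ 2C + 2K + 4δ. -/
/-- `γ : ℝ → X` (restricted to `[0, d(x,y)]`) is a geodesic from `x` to `y`. -/
def IsGeodesicFromTo {X : Type*} [MetricSpace X] (x y : X) (γ : ℝ → X) : Prop :=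
  γ 0 = x ∧ γ (dist x y) = y ∧
  ∀ s ∈ Set.Icc (0 : ℝ) (dist x y), ∀ t ∈ Set.Icc (0 : ℝ) (dist x y),
    dist (γ s) (γ t) = |s - t|

/-- `X` is a geodesic metric space. -/
def IsGeodesicSpace (X : Type*) [MetricSpace X] : Prop :=
  ∀ x y : X, ∃ γ : ℝ → X, IsGeodesicFromTo x y γ

/-- All geodesic triangles of `X` are `δ`-thin: every point on one side lies
within distance `δ` of the union of the other two sides. -/
def ThinTriangles (X : Type*) [MetricSpace X] (δ : ℝ) : Prop :=
  ∀ (x y z : X) (γ₁ γ₂ γ₃ : ℝ → X),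
    IsGeodesicFromTo x y γ₁ → IsGeodesicFromTo y z γ₂ → IsGeodesicFromTo x z γ₃ →
    ∀ p ∈ γ₁ '' Set.Icc (0 : ℝ) (dist x y),
      ∃ q ∈ (γ₂ '' Set.Icc (0 : ℝ) (dist y z)) ∪ (γ₃ '' Set.Icc (0 : ℝ) (dist x z)),
        dist p q ≤ δ

lemma geo_dists {X : Type*} [MetricSpace X] {x y : X} {γ : ℝ → X}
    (h : IsGeodesicFromTo x y γ) {s : ℝ} (hs : s ∈ Set.Icc (0 : ℝ) (dist x y)) :
    dist x (γ s) = s ∧ dist (γ s) y = dist x y - s := by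
  obtain ⟨h0, h1, h2⟩ := h
  have a := h2 0 ⟨le_rfl, dist_nonneg⟩ s hs
  have b := h2 s hs (dist x y) ⟨dist_nonneg, le_rfl⟩
  rw [h0, zero_sub, abs_neg, abs_of_nonneg hs.1] at a
  rw [h1, abs_of_nonpos (by linarith [hs.2])] at b
  exact ⟨a, by linarith⟩

/-- if `a` lies within `C` of a geodesic from `x` to `y` and the
surjective isometry `g` moves `x` and `y` by at most `K`, then `g` moves `a`
by at most `2C + 2K + 4δ`. -/
theorem statement6 {X : Type*} [MetricSpace X] (δ C K : ℝ)
    (hδ : 0 ≤ δ) (hC : 0 ≤ C) (hK : 0 ≤ K)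
    (hgeo : IsGeodesicSpace X) (hthin : ThinTriangles X δ)
    (x y a : X) (γ : ℝ → X) (hγ : IsGeodesicFromTo x y γ)
    (t : ℝ) (ht : t ∈ Set.Icc (0 : ℝ) (dist x y)) (ha : dist a (γ t) ≤ C)
    (g : X → X) (hg : Isometry g) (hgsurj : Function.Surjective g)
    (hx : dist x (g x) ≤ K) (hy : dist y (g y) ≤ K) :
    dist a (g a) ≤ 2 * C + 2 * K + 4 * δ := by
  have hxy : dist (g x) (g y) = dist x y := hg.dist_eq x y
  have hgγ : IsGeodesicFromTo (g x) (g y) (fun s => g (γ s)) := by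
    obtain ⟨h0, h1, h2⟩ := hγ
    refine ⟨by simp [h0], by simp [hxy, h1], ?_⟩
    rw [hxy]
    intro s hs u hu
    rw [hg.dist_eq]
    exact h2 s hs u hu
  suffices h : dist (γ t) (g (γ t)) ≤ K + 4 * δ by
    have e1 := dist_triangle a (γ t) (g a)
    have e2 := dist_triangle (γ t) (g (γ t)) (g a)
    have e3 : dist (g (γ t)) (g a) = dist a (γ t) := by rw [hg.dist_eq, dist_comm]
    linarith
  obtain ⟨p1, p2⟩ := geo_dists hγ ht
  have gp1 : dist (g x) (g (γ t)) = t := by rw [hg.dist_eq, p1]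
  have gp2 : dist (g y) (g (γ t)) = dist x y - t := by rw [hg.dist_eq, dist_comm, p2]
  obtain ⟨γ₂, h₂⟩ := hgeo y (g x)
  obtain ⟨γ₃, h₃⟩ := hgeo x (g x)
  obtain ⟨γ₄, h₄⟩ := hgeo y (g y)
  obtain ⟨q, hq | ⟨s, hs, rfl⟩, hd⟩ := hthin x y (g x) γ γ₂ γ₃ hγ h₂ h₃ (γ t) ⟨t, ht, rfl⟩
  · obtain ⟨r, ⟨s, hs, rfl⟩ | ⟨s, hs, rfl⟩, hr⟩ :=
      hthin y (g x) (g y) γ₂ _ γ₄ h₂ hgγ h₄ q hq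
    · rw [hxy] at hs
      have hr' : dist q (g (γ s)) ≤ δ := hr
      obtain ⟨s1, -⟩ := geo_dists hγ hs
      have gs1 : dist (g x) (g (γ s)) = s := by rw [hg.dist_eq, s1]
      have e0 := dist_triangle (γ t) q (g (γ s))
      have e1 := dist_triangle x (g x) (γ t)
      have e2 := dist_triangle (g x) (g (γ s)) (γ t)
      have e3 := dist_triangle (g x) x (g (γ s))
      have e4 := dist_triangle x (γ t) (g (γ s))
      have e5 : dist (g (γ s)) (g (γ t)) = |s - t| := by
        rw [hg.dist_eq]; exact hγ.2.2 s hs t ht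
      have e6 := dist_triangle (γ t) (g (γ s)) (g (γ t))
      have e7 : |s - t| ≤ K + 2 * δ := by
        rw [dist_comm (g (γ s)) (γ t)] at e2
        rw [dist_comm (g x) x] at e3
        rw [abs_le]; constructor <;> linarith
      linarith
    · obtain ⟨s1, s2⟩ := geo_dists h₄ hs
      have e0 := dist_triangle (γ t) q (γ₄ s)
      have e1 := dist_triangle (γ t) (γ₄ s) (g (γ t))
      have e2 := dist_triangle (γ₄ s) (g y) (g (γ t))
      have e3 := dist_triangle (γ t) (γ₄ s) y
      rw [dist_comm (γ₄ s) y] at e3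
      linarith
  · obtain ⟨s1, s2⟩ := geo_dists h₃ hs
    have e1 := dist_triangle (γ t) (γ₃ s) (g (γ t))
    have e2 := dist_triangle (γ₃ s) (g x) (g (γ t))
    have e3 := dist_triangle x (γ₃ s) (γ t)
    rw [dist_comm (γ₃ s) (γ t)] at e3
    linarith
end

section
/- Let X be a geodesic δ-hyperbolic metric space in which all geodesic triangles are δ-thin. Let x_0, x_1, x_2, x_3 be a (C,D)-chain in X with D ≥ 2C + 2δ + 1, and let K ≥ 0. If g : X → X is a surjective isometry with d(x_0, g x_0) ≤ K and d(x_3, g x_3) ≤ K, then d(x_1, g x_1) ≤ 2C + 2K + 12δ and d(x_2, g x_2) ≤ 2C + 2K + 12δ. -/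
theorem aux_move {X : Type*} [MetricSpace X] (δ C K : ℝ) (hX : IsDeltaHyperbolic X δ)
    (a b p : X) (g : X → X) (hg : Isometry g) (h : gromov a b p ≤ C + δ)
    (ha : dist a (g a) ≤ K) (hb : dist b (g b) ≤ K) :
    dist p (g p) ≤ 2 * C + K + 4 * δ := by
  have h1 := hX a b (g p) p
  have e1 := hg.dist_eq a p
  have e2 := hg.dist_eq b p
  have t1 := dist_triangle a (g a) (g p)
  have t2 := dist_triangle b (g b) (g p)
  have c := dist_comm p (g p)
  unfold gromov at *
  rcases min_choice ((dist a p + dist (g p) p - dist a (g p)) / 2)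
    ((dist b p + dist (g p) p - dist b (g p)) / 2) with hm | hm <;> rw [hm] at h1 <;> linarith

theorem aux_gromov {X : Type*} [MetricSpace X] (δ C D : ℝ) (hδ : 0 ≤ δ)
    (hX : IsDeltaHyperbolic X δ) (x₀ x₁ x₂ x₃ : X)
    (h₁ : gromov x₀ x₂ x₁ ≤ C) (h₂ : gromov x₁ x₃ x₂ ≤ C)
    (hd₁ : D ≤ dist x₁ x₂) (hD : 2 * C + 2 * δ + 1 ≤ D) :
    gromov x₀ x₃ x₁ ≤ C + δ := by
  have h := hX x₀ x₂ x₃ x₁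
  have c1 := dist_comm x₁ x₂
  have c2 := dist_comm x₂ x₃
  have c3 := dist_comm x₁ x₃
  rcases min_choice (gromov x₀ x₃ x₁) (gromov x₂ x₃ x₁) with hm | hm <;> rw [hm] at h
  · linarith
  · unfold gromov at *
    linarith

/-- if `x₀, x₁, x₂, x₃` is a `(C,D)`-chain with `D ≥ 2C + 2δ + 1`
in a geodesic `δ`-hyperbolic space with `δ`-thin triangles, and a surjective
isometry `g` moves `x₀` and `x₃` by at most `K`, then `g` moves `x₁` and `x₂`
by at most `2C + 2K + 12δ`. -/
theorem statement7 {X : Type*} [MetricSpace X] (δ C D K : ℝ)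
    (hδ : 0 ≤ δ) (hC : 0 ≤ C) (hK : 0 ≤ K)
    (hX : IsDeltaHyperbolic X δ) (hgeo : IsGeodesicSpace X)
    (hthin : ThinTriangles X δ)
    (x₀ x₁ x₂ x₃ : X)
    (h₁ : gromov x₀ x₂ x₁ ≤ C) (h₂ : gromov x₁ x₃ x₂ ≤ C)
    (hd₀ : D ≤ dist x₀ x₁) (hd₁ : D ≤ dist x₁ x₂) (hd₂ : D ≤ dist x₂ x₃)
    (hD : 2 * C + 2 * δ + 1 ≤ D)
    (g : X → X) (hg : Isometry g) (hgsurj : Function.Surjective g)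
    (hx₀ : dist x₀ (g x₀) ≤ K) (hx₃ : dist x₃ (g x₃) ≤ K) :
    dist x₁ (g x₁) ≤ 2 * C + 2 * K + 12 * δ ∧
    dist x₂ (g x₂) ≤ 2 * C + 2 * K + 12 * δ := by
  have c := dist_comm x₁ x₂
  have sw : ∀ a b z : X, gromov a b z = gromov b a z := by
    intro a b z
    unfold gromov
    rw [dist_comm a b]
    ring
  have m1 := aux_move δ C K hX x₀ x₃ x₁ g hg
    (aux_gromov δ C D hδ hX x₀ x₁ x₂ x₃ h₁ h₂ hd₁ hD) hx₀ hx₃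
  have m2 := aux_move δ C K hX x₃ x₀ x₂ g hg
    (aux_gromov δ C D hδ hX x₃ x₂ x₁ x₀ (by rw [sw]; exact h₂) (by rw [sw]; exact h₁)
      (by rw [← c]; exact hd₁) hD) hx₃ hx₀
  constructor <;> linarith
end
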